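/- Let G be a finite group and let f : G → ℂ be any function. Then (1/|G|²) ∑_{a,b ∈ G} f(aba⁻¹b⁻¹) = ∑_{ρ ∈ Irr(G)} ⟨f, χ_ρ⟩ / dim ρ, where ⟨f, χ_ρ⟩ = (1/|G|) ∑_{g} f(g) conj(χ_ρ(g)). -/

import Mathlib

open CategoryTheory
open scoped ComplexOrder

theorem aux_char_inv {G : Type} [Group G] [Fintype G] (V : FDRep ℂ G) (h : G) :
    V.character h⁻¹ = (starRingEnd ℂ) (V.character h) := by
  classical
  let b := Module.finBasis ℂ V
  let M : G → Matrix _ _ ℂ := fun g => LinearMap.toMatrixAlgEquiv b (V.ρ g)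
  have hM : ∀ g g', M (g * g') = M g * M g' := fun g g' => by simp [M]
  have hM1 : M 1 = 1 := by simp [M]
  have htr : ∀ g, V.character g = (M g).trace := fun g => by
    rw [FDRep.character, LinearMap.trace_eq_matrix_trace ℂ b]; rfl
  let P : Matrix _ _ ℂ := ∑ g, (M g).conjTranspose * M g
  have hP : P.PosDef := by
    have : P = (M 1).conjTranspose * M 1 +
        ∑ g ∈ Finset.univ.erase 1, (M g).conjTranspose * M g := by
      exact (Finset.add_sum_erase _ (fun g => (M g).conjTranspose * M g) (Finset.mem_univ 1)).symm
    rw [this, hM1]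
    refine Matrix.PosDef.add_posSemidef (by simpa using Matrix.PosDef.one) ?_
    exact Matrix.posSemidef_sum _ fun g _ => Matrix.posSemidef_conjTranspose_mul_self _
  have hinv : (M h).conjTranspose * P * M h = P := by
    simp only [P, Finset.mul_sum, Finset.sum_mul]
    refine Fintype.sum_equiv (Equiv.mulRight h) _ _ fun g => ?_
    simp [hM, Matrix.conjTranspose_mul, Matrix.mul_assoc]
  have h1 : M h * M h⁻¹ = 1 := by rw [← hM]; simp [hM1]
  have h2 : (M h).conjTranspose * P = P * M h⁻¹ := by
    calc _ = (M h).conjTranspose * P * (M h * M h⁻¹) := by rw [h1, mul_one]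
      _ = _ := by rw [← mul_assoc, hinv]
  have hu : IsUnit P := hP.isUnit
  have h3 : P * M h⁻¹ * P⁻¹ = (M h).conjTranspose := by
    rw [← h2, Matrix.mul_assoc, Matrix.mul_nonsing_inv _ ((Matrix.isUnit_iff_isUnit_det _).1 hu),
      mul_one]
  rw [htr, htr, ← Matrix.trace_conj hu, h3, Matrix.trace_conjTranspose]; rfl

theorem aux_schur {G : Type} [Group G] [Fintype G] (V : FDRep ℂ G) [Simple V]
    (T : V →ₗ[ℂ] V) (hT : ∀ g, T ∘ₗ V.ρ g = V.ρ g ∘ₗ T) : ∃ c : ℂ, T = c • LinearMap.id := by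
  let F : V ⟶ V := ⟨InducedCategory.homMk (ModuleCat.ofHom T), fun g ↦ by
    ext1
    ext x
    exact LinearMap.congr_fun (hT g) x⟩
  obtain ⟨c, hc⟩ := endomorphism_simple_eq_smul_id ℂ F
  refine ⟨c, ?_⟩
  have := congrArg (fun f : V ⟶ V => f.hom.hom.hom) hc
  exact this.symm

theorem aux_dim {G : Type} [Group G] [Fintype G] (V : FDRep ℂ G) [Simple V] :
    (Module.finrank ℂ V : ℂ) ≠ 0 := by
  intro h
  have h0 : Module.finrank ℂ V = 0 := by exact_mod_cast h
  have : Subsingleton V := Module.finrank_zero_iff.1 h0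
  apply id_nonzero V
  ext x
  exact Subsingleton.elim (α := V) _ _

theorem aux_scalar {G : Type} [Group G] [Fintype G] (V : FDRep ℂ G) [Simple V]
    (T : V →ₗ[ℂ] V) (hT : ∀ g, T ∘ₗ V.ρ g = V.ρ g ∘ₗ T) :
    T = (LinearMap.trace ℂ V T / Module.finrank ℂ V) • LinearMap.id := by
  obtain ⟨c, rfl⟩ := aux_schur V T hT
  have := aux_dim V
  congr 1
  simp [LinearMap.trace_id]
  field_simp

theorem aux_conj_sum {G : Type} [Group G] [Fintype G] (V : FDRep ℂ G) [Simple V] (b c : G) :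
    ∑ a, V.character (a * b * a⁻¹ * c) =
      Fintype.card G * V.character b * V.character c / Module.finrank ℂ V := by
  have key := aux_scalar V (∑ a, V.ρ (a * b * a⁻¹)) (fun g => by
    change (∑ a, V.ρ (a * b * a⁻¹)) * V.ρ g = V.ρ g * (∑ a, V.ρ (a * b * a⁻¹))
    rw [Finset.sum_mul, Finset.mul_sum]
    symm
    refine Fintype.sum_equiv (Equiv.mulLeft g) _ _ fun a => ?_
    rw [← map_mul, ← map_mul]; congr 1; simp [mul_assoc])
  have ht : LinearMap.trace ℂ V (∑ a, V.ρ (a * b * a⁻¹)) = Fintype.card G * V.character b := by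
    rw [map_sum]
    have : ∀ a, LinearMap.trace ℂ V (V.ρ (a * b * a⁻¹)) = V.character b := fun a =>
      V.char_conj b a
    simp only [this]; simp
  have h2 := congrArg (fun T : V →ₗ[ℂ] V => LinearMap.trace ℂ V (T * V.ρ c)) key
  simp only [ht] at h2
  rw [Finset.sum_mul, map_sum] at h2
  simp only [← map_mul] at h2
  change ∑ a, V.character (a * b * a⁻¹ * c) = _ at h2
  rw [h2]
  rw [smul_mul_assoc, map_smul]
  change _ * V.character c = _
  ring

theorem aux_weight {G : Type} [Group G] [Fintype G] (V : FDRep ℂ G) [Simple V] (w : G → ℂ)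
    (hw : ∀ g h, w (h * g * h⁻¹) = w g) :
    ∑ g, w g • V.ρ g =
      ((∑ g, w g * V.character g) / Module.finrank ℂ V) • LinearMap.id := by
  have key := aux_scalar V (∑ g, w g • V.ρ g) (fun h => by
    change (∑ g, w g • V.ρ g) * V.ρ h = V.ρ h * (∑ g, w g • V.ρ g)
    rw [Finset.sum_mul, Finset.mul_sum]
    refine Fintype.sum_equiv (MulAut.conj h⁻¹).toEquiv _ _ fun a => ?_
    have := hw a h⁻¹
    simp only [inv_inv, mul_assoc] at this
    simp [this, ← map_mul, mul_assoc])
  rw [key]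
  congr 2
  simp [map_sum]; rfl

theorem aux_orth {G : Type} [Group G] [Fintype G] (V W : FDRep ℂ G) [Simple V] [Simple W]
    [Decidable (Nonempty (V ≅ W))] :
    ∑ g, V.character g⁻¹ * W.character g =
      if Nonempty (V ≅ W) then (Fintype.card G : ℂ) else 0 := by
  have : Invertible (Nat.card G : ℂ) := invertibleOfNonzero (NeZero.ne _)
  have h := FDRep.char_orthonormal W V
  have hc : (Fintype.card G : ℂ) ≠ 0 := by simp
  simp_rw [mul_comm (V.character _)]
  rw [inv_mul_eq_iff_eq_mul₀ (NeZero.ne _)] at h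
  rw [h, Iso.nonempty_iso_symm]
  simp

theorem aux_conv {G : Type} [Group G] [Fintype G] (V : FDRep ℂ G) [Simple V] (h : G) :
    ∑ b, V.character b * V.character (b⁻¹ * h) =
      Fintype.card G * V.character h / Module.finrank ℂ V := by
  classical
  have key := aux_weight V (fun g => V.character g⁻¹) (fun g k => by
    simpa [mul_assoc] using V.char_conj g⁻¹ k)
  have h1 := aux_orth V V
  rw [if_pos ⟨Iso.refl V⟩] at h1
  rw [h1] at key
  have h2 := congrArg (fun T : V →ₗ[ℂ] V => LinearMap.trace ℂ V (T * V.ρ h)) key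
  simp only [Finset.sum_mul, map_sum, smul_mul_assoc, map_smul, ← map_mul] at h2
  rw [← Equiv.sum_comp (Equiv.inv G)]
  simp only [Equiv.inv_apply, inv_inv]
  refine Eq.trans h2 ?_
  change _ * V.character h = _
  ring

theorem aux_simple {G : Type} [Group G] [Fintype G] {V : Type} [AddCommGroup V] [Module ℂ V]
    [Module.Finite ℂ V] (ρ : Representation ℂ G V) [ρ.IsIrreducible] : Simple (FDRep.of ρ) := by
  classical
  have : Invertible (Nat.card G : ℂ) := invertibleOfNonzero (NeZero.ne _)
  rw [FDRep.simple_iff_char_is_norm_one]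
  have h := Representation.char_orthonormal ρ ρ
  rw [if_pos ⟨Representation.Equiv.refl ρ⟩, inv_mul_eq_iff_eq_mul₀ (NeZero.ne _), mul_one] at h
  exact h

theorem aux_kill {G : Type} [Group G] [Fintype G] (z : G → ℂ)
    (hz : ∀ V : FDRep ℂ G, Simple V → ∑ g, z g • V.ρ g = 0)
    (M : Type) [AddCommGroup M] [Module (MonoidAlgebra ℂ G) M]
    [hs : IsSimpleModule (MonoidAlgebra ℂ G) M] (x : M) :
    (∑ g, MonoidAlgebra.single g (z g) : MonoidAlgebra ℂ G) • x = 0 := by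
  letI : Module ℂ M := Module.compHom M (algebraMap ℂ (MonoidAlgebra ℂ G))
  haveI : IsScalarTower ℂ (MonoidAlgebra ℂ G) M := ⟨fun c y m => by
    rw [Algebra.smul_def, mul_smul]; rfl⟩
  let ρ : Representation ℂ G M := Representation.ofModule' M
  have hρ : ∀ y : MonoidAlgebra ℂ G, ∀ m : M, ρ.asAlgebraHom y m = y • m := by
    intro y m
    induction y using MonoidAlgebra.induction_linear with
    | zero => simp
    | add a b ha hb => rw [map_add, LinearMap.add_apply, ha, hb, add_smul]
    | single g a =>
      rw [Representation.asAlgebraHom_single, LinearMap.smul_apply]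
      have : MonoidAlgebra.single g a = a • MonoidAlgebra.of ℂ G g := by simp
      rw [this, smul_assoc]
      simp [ρ, Representation.ofModule']
  let e : ρ.asModule ≃ₗ[MonoidAlgebra ℂ G] M :=
    { ρ.asModuleEquiv.toAddEquiv with
      map_smul' := fun y m => hρ y m }
  have hirr : ρ.IsIrreducible :=
    (Representation.irreducible_iff_isSimpleModule_asModule ρ).2 (IsSimpleModule.congr e)
  have hf : Module.Finite ℂ M := Module.Finite.trans (MonoidAlgebra ℂ G) M
  have h0 := hz _ (aux_simple ρ)
  have h1 := hρ (∑ g, MonoidAlgebra.single g (z g)) x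
  rw [map_sum] at h1
  simp only [Representation.asAlgebraHom_single] at h1
  rw [← h1]
  exact LinearMap.congr_fun h0 x

theorem aux_complete
    (G : Type) [Group G] [Fintype G]
    (ι : Type*) [Fintype ι] (W : ι → FDRep ℂ G)
    (hsimple : ∀ i, CategoryTheory.Simple (W i))
    (hdist : ∀ i j, Nonempty (W i ≅ W j) → i = j)
    (hall : ∀ V : FDRep ℂ G, CategoryTheory.Simple V → ∃ i, Nonempty (V ≅ W i)) [DecidableEq G]
    (g : G) : ∑ i, (Module.finrank ℂ (W i) : ℂ) * (W i).character g =
      if g = 1 then (Fintype.card G : ℂ) else 0 := by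
  classical
  let z : G → ℂ := fun g => (if g = 1 then (Fintype.card G : ℂ) else 0) -
    ∑ i, (Module.finrank ℂ (W i) : ℂ) * (W i).character g⁻¹
  -- `z` acts as zero on each `W j`
  have hz : ∀ j, ∑ g, z g • (W j).ρ g = 0 := by
    intro j
    rw [aux_weight (W j) z (fun g h => by
      have : ∀ i, (W i).character (h * g * h⁻¹)⁻¹ = (W i).character g⁻¹ := fun i => by
        simpa [mul_assoc] using (W i).char_conj g⁻¹ h
      simp only [z, this]; simp)]
    have : ∑ g, z g * (W j).character g = 0 := by
      simp only [z, sub_mul, Finset.sum_sub_distrib, Finset.sum_mul, ite_mul, zero_mul,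
        Finset.sum_ite_eq', Finset.mem_univ, if_true, FDRep.char_one]
      rw [Finset.sum_comm]
      simp only [mul_assoc, ← Finset.mul_sum, aux_orth]
      rw [Finset.sum_eq_single j]
      · rw [if_pos ⟨Iso.refl _⟩]; ring
      · intro i _ hij
        rw [if_neg fun h => hij (hdist _ _ h), mul_zero]
      · simp
    rw [this]; simp
  have hz' : ∀ V : FDRep ℂ G, Simple V → ∑ g, z g • V.ρ g = 0 := by
    intro V hV
    obtain ⟨i, ⟨e⟩⟩ := hall V hV
    have : ∀ g, V.ρ g = (FDRep.isoToLinearEquiv e.symm).conj ((W i).ρ g) := fun g =>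
      FDRep.Iso.conj_ρ e.symm g
    simp only [this]
    rw [← map_zero (FDRep.isoToLinearEquiv e.symm).conj, ← hz i, map_sum]
    simp only [map_smul]
  let Z : MonoidAlgebra ℂ G := ∑ g, MonoidAlgebra.single g (z g)
  have hZ : Z = 0 := by
    have hJ : Z ∈ Ring.jacobson (MonoidAlgebra ℂ G) := by
      rw [Ring.jacobson, Module.jacobson, Submodule.mem_sInf]
      intro m hm
      have hs : IsSimpleModule (MonoidAlgebra ℂ G) (MonoidAlgebra ℂ G ⧸ m) :=
        isSimpleModule_iff_isCoatom.2 hm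
      have h0 := aux_kill z hz' (MonoidAlgebra ℂ G ⧸ m) (Submodule.Quotient.mk 1)
      rw [← Submodule.Quotient.mk_smul, smul_eq_mul, mul_one] at h0
      exact (Submodule.Quotient.mk_eq_zero m).1 h0
    rw [IsSemisimpleRing.jacobson_eq_bot] at hJ
    simpa using hJ
  have h1 := congrArg (fun x : MonoidAlgebra ℂ G => x.coeff g⁻¹) hZ
  have h2 : z g⁻¹ = 0 := by
    simpa [Z, Finsupp.single_apply] using h1
  simp only [z, inv_inv, inv_eq_one] at h2
  exact (sub_eq_zero.1 h2).symm

theorem average_f_commutator_eq_sum_inner_div_dim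
    (G : Type) [Group G] [Fintype G]
    (ι : Type*) [Fintype ι] (W : ι → FDRep ℂ G)
    (hsimple : ∀ i, CategoryTheory.Simple (W i))
    (hdist : ∀ i j, Nonempty (W i ≅ W j) → i = j)
    (hall : ∀ V : FDRep ℂ G, CategoryTheory.Simple V → ∃ i, Nonempty (V ≅ W i))
    (f : G → ℂ) :
    (((Fintype.card G : ℂ) ^ 2)⁻¹) * ∑ a : G, ∑ b : G, f (a * b * a⁻¹ * b⁻¹) =
      ∑ i, ((Fintype.card G : ℂ)⁻¹ * ∑ g : G, f g * (starRingEnd ℂ) ((W i).character g)) /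
        (Module.finrank ℂ (W i) : ℂ) := by
  classical
  have hc : (Fintype.card G : ℂ) ≠ 0 := by simp
  have hcount : ∀ g : G, ∑ a : G, ∑ b : G, (if a * b * a⁻¹ * b⁻¹ * g⁻¹ = 1 then
      (Fintype.card G : ℂ) else 0) =
      ∑ i, (Fintype.card G : ℂ) ^ 2 * (starRingEnd ℂ) ((W i).character g) /
        (Module.finrank ℂ (W i) : ℂ) := by
    intro g
    simp only [← aux_complete G ι W hsimple hdist hall]
    rw [Finset.sum_comm]
    have : ∀ b : G, ∑ a : G, ∑ i, (Module.finrank ℂ (W i) : ℂ) *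
        (W i).character (a * b * a⁻¹ * b⁻¹ * g⁻¹) =
        ∑ i, (Fintype.card G : ℂ) * ((W i).character b * (W i).character (b⁻¹ * g⁻¹)) := by
      intro b
      rw [Finset.sum_comm]
      refine Finset.sum_congr rfl fun i _ => ?_
      rw [← Finset.mul_sum]
      simp only [mul_assoc _ b⁻¹ g⁻¹]
      rw [aux_conj_sum]
      have := aux_dim (W i)
      field_simp
    simp only [this]
    rw [Finset.sum_comm]
    refine Finset.sum_congr rfl fun i _ => ?_
    rw [← Finset.mul_sum, aux_conv, aux_char_inv]
    ring
  have hf : ∑ a : G, ∑ b : G, f (a * b * a⁻¹ * b⁻¹) = (Fintype.card G : ℂ)⁻¹ *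
      ∑ g, f g * ∑ a : G, ∑ b : G, (if a * b * a⁻¹ * b⁻¹ * g⁻¹ = 1 then
      (Fintype.card G : ℂ) else 0) := by
    simp only [Finset.mul_sum]
    symm
    rw [Finset.sum_comm]
    refine Finset.sum_congr rfl fun a _ => ?_
    rw [Finset.sum_comm]
    refine Finset.sum_congr rfl fun b _ => ?_
    simp only [mul_inv_eq_one, mul_ite, mul_zero, Finset.sum_ite_eq, Finset.mem_univ, if_true]
    field_simp
  rw [hf]
  simp only [hcount, Finset.mul_sum, Finset.sum_div]
  rw [Finset.sum_comm]
  refine Finset.sum_congr rfl fun i _ => Finset.sum_congr rfl fun g _ => ?_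
  field_simp
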